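/- Let P_1, …, P_N ∈ I be N distinct indices, and let f, f' be two distinct rational sections of L_D. Then the number of indices j ∈ {1, …, N} with multiplicity m(P_j) ≥ 1 is at most deg_D(f) + deg_D(f'). In particular, if deg_D(f) ≤ h, deg_D(f') ≤ h, and 2h < N, then m(P_j) = 0 for at least N − 2h values of j. -/

import Mathlib

/-!
Write `A = v_P(f) + d_P`, `B = v_P(f') + d_P`, `C = v_P(f - f') + d_P` and
`E = C + (max 0 A - A) + (max 0 B - B) = C + max 0 (-A) + max 0 (-B)`.
The multiplicity `m P` equals `E` when `A` and `B` are both nonnegative or both negative, and is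
`0` otherwise; the ultrametric inequality `C ≥ min A B` gives `E ≥ 0` in every case, so
`0 ≤ m P ≤ E` (`mult_bounds`). By the sum formula for `f`, `f'`, `f - f'` and by `∑ d_P = 0`, the
sums of `A`, `B` and `C` vanish, so `E` sums to `deg_D f + deg_D f'`. Hence at most that many
indices have `m P ≥ 1`, and since `m P ≥ 0`, all the remaining ones have `m P = 0`.
-/

theorem val_neg {K : Type*} [Field K] (w : K → ℤ)
    (hmul : ∀ x y : K, x ≠ 0 → y ≠ 0 → w (x * y) = w x + w y)
    (x : K) (hx : x ≠ 0) : w (-x) = w x := by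
  have h1 := hmul 1 1 one_ne_zero one_ne_zero
  have h2 := hmul (-1) (-1) (neg_ne_zero.2 one_ne_zero) (neg_ne_zero.2 one_ne_zero)
  have h3 := hmul (-1) x (neg_ne_zero.2 one_ne_zero) hx
  rw [mul_one] at h1
  rw [neg_mul_neg, mul_one] at h2
  rw [neg_one_mul] at h3
  omega

/-- At a single place, with `w` the valuation and `c` the local trivialization, the multiplicity is
nonnegative and at most the local term whose sum over all places is the sum of the degrees. -/
theorem mult_bounds {K : Type*} [Field K] (w : K → ℤ)
    (hmul : ∀ x y : K, x ≠ 0 → y ≠ 0 → w (x * y) = w x + w y)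
    (hadd : ∀ x y : K, x ≠ 0 → y ≠ 0 → x + y ≠ 0 → min (w x) (w y) ≤ w (x + y))
    (c f f' : K) (hc : c ≠ 0) (hf : f ≠ 0) (hf' : f' ≠ 0) (hne : f ≠ f') (m : ℤ)
    (hm : m = if 0 ≤ w (c * f) ∧ 0 ≤ w (c * f') then w (c * f - c * f')
      else if w (c * f) < 0 ∧ w (c * f') < 0 then w ((c * f)⁻¹ - (c * f')⁻¹) else 0) :
    0 ≤ m ∧ m ≤ (w (f - f') + w c) + (max 0 (w f + w c) - (w f + w c))
      + (max 0 (w f' + w c) - (w f' + w c)) := by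
  have hs : f - f' ≠ 0 := sub_ne_zero.2 hne
  have hmin := hadd f (-f') hf (neg_ne_zero.2 hf') (by rwa [← sub_eq_add_neg])
  rw [← sub_eq_add_neg, val_neg w hmul f' hf'] at hmin
  have hsub : w (c * f - c * f') = w c + w (f - f') := by rw [← mul_sub, hmul _ _ hc hs]
  have hkey : ((c * f)⁻¹ - (c * f')⁻¹) * (c * (f * f')) = -(f - f') := by
    field_simp
    ring
  have hx : (c * f)⁻¹ - (c * f')⁻¹ ≠ 0 := by
    intro h0
    rw [h0, zero_mul] at hkey
    exact neg_ne_zero.2 hs hkey.symm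
  have hinv := congrArg w hkey
  rw [hmul _ _ hx (mul_ne_zero hc (mul_ne_zero hf hf')), hmul _ _ hc (mul_ne_zero hf hf'),
    hmul _ _ hf hf', val_neg w hmul _ hs] at hinv
  rw [hsub, hmul _ _ hc hf, hmul _ _ hc hf'] at hm
  split_ifs at hm <;> omega


/-- With the setup of valuations, divisor `D`, and
multiplicities `m` as before, let `P : Fin N → I` enumerate `N` distinct
indices and let `f, f'` be distinct rational sections of `L_D`.  Then the
number of `j` with `m (P j) ≥ 1` is at most `deg_D f + deg_D f'`; in
particular, if both degrees are `≤ h` and `2h < N`, then `m (P j) = 0` for at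
least `N - 2h` values of `j`. -/
theorem stmt_2 {K : Type*} [Field K] {I : Type*}
    (v : I → K → ℤ)
    (hmul : ∀ P : I, ∀ x y : K, x ≠ 0 → y ≠ 0 → v P (x * y) = v P x + v P y)
    (hadd : ∀ P : I, ∀ x y : K, x ≠ 0 → y ≠ 0 → x + y ≠ 0 →
      min (v P x) (v P y) ≤ v P (x + y))
    (hsum : ∀ g : K, g ≠ 0 → {P : I | v P g ≠ 0}.Finite ∧ ∑ᶠ P : I, v P g = 0)
    (d : I → ℤ) (hdfin : {P : I | d P ≠ 0}.Finite) (hdsum : ∑ᶠ P : I, d P = 0)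
    (φ : I → K) (hφ : ∀ P : I, φ P ≠ 0) (hφv : ∀ P : I, v P (φ P) = d P)
    (f f' : K) (hf : f ≠ 0) (hf' : f' ≠ 0) (hne : f ≠ f')
    (m : I → ℤ)
    (hm : ∀ P : I, m P =
      if 0 ≤ v P (φ P * f) ∧ 0 ≤ v P (φ P * f') then v P (φ P * f - φ P * f')
      else if v P (φ P * f) < 0 ∧ v P (φ P * f') < 0 then
        v P ((φ P * f)⁻¹ - (φ P * f')⁻¹)
      else 0)
    (N : ℕ) (P : Fin N → I) (hP : Function.Injective P) :
    ((Finset.univ.filter fun j : Fin N => 1 ≤ m (P j)).card : ℤ)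
        ≤ (∑ᶠ p : I, max 0 (v p f + d p)) + (∑ᶠ p : I, max 0 (v p f' + d p)) ∧
      ∀ h : ℕ,
        (∑ᶠ p : I, max 0 (v p f + d p)) ≤ (h : ℤ) →
        (∑ᶠ p : I, max 0 (v p f' + d p)) ≤ (h : ℤ) →
        2 * h < N →
        (N : ℤ) - 2 * h ≤ ((Finset.univ.filter fun j : Fin N => m (P j) = 0).card : ℤ) := by
  classical
  have hb : ∀ p, 0 ≤ m p ∧ m p ≤ (v p (f - f') + d p) + (max 0 (v p f + d p) - (v p f + d p))
      + (max 0 (v p f' + d p) - (v p f' + d p)) := by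
    intro p
    have := mult_bounds (v p) (hmul p) (hadd p) (φ p) f f' (hφ p) hf hf' hne (m p) (hm p)
    rwa [hφv p] at this
  have hfin : ∀ g : K, g ≠ 0 → (Function.support fun p => v p g + d p).Finite := fun g hg =>
    ((hsum g hg).1.union hdfin).subset (Function.support_add (fun p => v p g) d)
  have hzero : ∀ g : K, g ≠ 0 → ∑ᶠ p, (v p g + d p) = 0 := by
    intro g hg
    rw [finsum_add_distrib (hsum g hg).1 hdfin, (hsum g hg).2, hdsum, add_zero]
  have hmax : ∀ g : K, g ≠ 0 → (Function.support fun p => max 0 (v p g + d p)).Finite := by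
    intro g hg
    refine (hfin g hg).subset fun p hp h0 => hp ?_
    simp only at h0 ⊢
    rw [h0, max_self]
  have hdiff : ∀ g : K, g ≠ 0 →
      (Function.support fun p => max 0 (v p g + d p) - (v p g + d p)).Finite := by
    intro g hg
    refine (hfin g hg).subset fun p hp h0 => hp ?_
    simp only at h0 ⊢
    rw [h0, max_self, sub_zero]
  have hs : f - f' ≠ 0 := sub_ne_zero.2 hne
  have hfin2 : (Function.support fun p => (v p (f - f') + d p)
      + (max 0 (v p f + d p) - (v p f + d p))).Finite :=
    ((hfin _ hs).union (hdiff f hf)).subset (Function.support_add _ _)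
  have hfin3 : (Function.support fun p => (v p (f - f') + d p)
      + (max 0 (v p f + d p) - (v p f + d p)) + (max 0 (v p f' + d p) - (v p f' + d p))).Finite :=
    (hfin2.union (hdiff f' hf')).subset (Function.support_add _ _)
  have htot : ∑ᶠ p, ((v p (f - f') + d p) + (max 0 (v p f + d p) - (v p f + d p))
        + (max 0 (v p f' + d p) - (v p f' + d p)))
      = (∑ᶠ p : I, max 0 (v p f + d p)) + (∑ᶠ p : I, max 0 (v p f' + d p)) := by
    rw [finsum_add_distrib hfin2 (hdiff f' hf'), finsum_add_distrib (hfin _ hs) (hdiff f hf),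
      finsum_sub_distrib (hmax f hf) (hfin f hf), finsum_sub_distrib (hmax f' hf') (hfin f' hf'),
      hzero _ hs, hzero f hf, hzero f' hf']
    ring
  have hcard : ((Finset.univ.filter fun j : Fin N => 1 ≤ m (P j)).card : ℤ)
      ≤ (∑ᶠ p : I, max 0 (v p f + d p)) + (∑ᶠ p : I, max 0 (v p f' + d p)) := by
    rw [← htot, ← Finset.card_image_of_injective _ hP, finsum_eq_sum _ hfin3, Finset.cast_card]
    refine (Finset.sum_le_sum fun p hp => ?_).trans
      (Finset.sum_le_sum_of_subset_of_nonneg ?_ fun p _ _ => (hb p).1.trans (hb p).2)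
    · obtain ⟨j, hj, rfl⟩ := Finset.mem_image.1 hp
      exact (Finset.mem_filter.1 hj).2.trans (hb (P j)).2
    · intro p hp
      obtain ⟨j, hj, rfl⟩ := Finset.mem_image.1 hp
      have h1 := (Finset.mem_filter.1 hj).2.trans (hb (P j)).2
      rw [Set.Finite.mem_toFinset, Function.mem_support]
      omega
  refine ⟨hcard, fun h h1 h2 _ => ?_⟩
  have hsplit := Finset.card_filter_add_card_filter_not
    (s := (Finset.univ : Finset (Fin N))) (fun j => 1 ≤ m (P j))
  have hcongr : (Finset.univ.filter fun j : Fin N => ¬ 1 ≤ m (P j))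
      = Finset.univ.filter fun j : Fin N => m (P j) = 0 := by
    refine Finset.filter_congr fun j _ => ?_
    have := (hb (P j)).1
    omega
  rw [hcongr, Finset.card_univ, Fintype.card_fin] at hsplit
  omega
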